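/- For every z ∈ ℂ with Re z > 0 and Im z ≠ 0: ∫_{−1}^1 ψ(x)/(z−x) dx = π/2 − sgn(Im z)·i·Log((1+(1−z²)^{1/2})/z), with principal branches of Log and the square root; equivalently the derivative of g satisfies g'(z) = π/2 − iπψ(z) for Im z > 0 and g'(z) = π/2 + iπψ(z) for Im z < 0 (Re z > 0). -/

import Mathlib

open MeasureTheory Filter Real

/-- The equilibrium density `ψ(x) = (1/π) log((1+√(1-x²))/|x|)`. -/
noncomputable def psiDens (x : ℝ) : ℝ :=
  (1 / π) * Real.log ((1 + Real.sqrt (1 - x ^ 2)) / |x|)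

/-- The `g`-function `g(z) = ∫_{-1}^1 Log(z-x) ψ(x) dx` (principal logarithm). -/
noncomputable def gFun (z : ℂ) : ℂ :=
  ∫ x in (-1 : ℝ)..1, Complex.log (z - x) * (psiDens x : ℂ)

/-- The analytic continuation `ψ(z) = (1/π) Log((1+(1-z²)^{1/2})/z)` of the equilibrium
density, with principal branches. -/
noncomputable def psiC (z : ℂ) : ℂ :=
  (1 / (π : ℂ)) * Complex.log ((1 + (1 - z ^ 2) ^ ((1 : ℂ) / 2)) / z)

/-! The density `ψ` is that of `S cos Θ` with `S` uniform on `[0, 1]` and `Θ` uniform on `[0, π]`.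
Averaging `1 / (z - s cos Θ)` over `Θ` gives `1 / √(z² - s²)`, so the Cauchy transform of `ψ` is
`∫₀¹ ds / √(z² - s²)`. Off the real axis, `√(z² - s²) = sgn(Im z) i √(s² - z²)` with a principal
root on the right, and `Log ((s + √(s² - z²)) / z)` is a primitive of `1 / √(s² - z²)`. The formula
for `g'` follows by differentiating under the integral sign. -/

theorem psiDens_of_ne_zero {x : ℝ} (hx : x ≠ 0) :
    psiDens x = π⁻¹ * (log (1 + √(1 - x ^ 2)) - log x) := by
  rw [psiDens, one_div, log_div (by positivity) (abs_ne_zero.mpr hx), log_abs]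

theorem continuous_mul_psiDens : Continuous fun x ↦ x * psiDens x := by
  have hcont : Continuous fun x : ℝ ↦ π⁻¹ * (x * log (1 + √(1 - x ^ 2)) - x * log x) :=
    continuous_const.mul <| (continuous_id.mul <| Continuous.log (by fun_prop)
      fun x ↦ by positivity).sub continuous_mul_log
  refine hcont.congr fun x ↦ ?_
  rcases eq_or_ne x 0 with rfl | hx
  · simp
  · rw [psiDens_of_ne_zero hx]
    ring

theorem intervalIntegrable_psiDens (a b : ℝ) : IntervalIntegrable psiDens volume a b := by
  have hlog : Continuous fun x : ℝ ↦ log (1 + √(1 - x ^ 2)) :=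
    Continuous.log (by fun_prop) fun x ↦ by positivity
  refine (((hlog.intervalIntegrable a b).sub
    intervalIntegral.intervalIntegrable_log').const_mul π⁻¹).congr_ae (ae_restrict_of_ae ?_)
  filter_upwards [Measure.ae_ne volume 0] with x hx
  rw [psiDens_of_ne_zero hx]

theorem hasDerivAt_psiDens {x : ℝ} (hx : x ∈ Set.Ioo (-1) 1) (hx0 : x ≠ 0) :
    HasDerivAt psiDens (-π⁻¹ * (√(1 - x ^ 2))⁻¹ * x⁻¹) x := by
  have hpos : 0 < 1 - x ^ 2 := by nlinarith [hx.1, hx.2]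
  have hsqrt : HasDerivAt (fun y : ℝ ↦ 1 + √(1 - y ^ 2)) (-(2 * x) / (2 * √(1 - x ^ 2))) x := by
    simpa using (((hasDerivAt_pow 2 x).const_sub 1).sqrt hpos.ne').const_add 1
  have hlog := ((hsqrt.log (by positivity)).sub (hasDerivAt_log hx0)).const_mul π⁻¹
  refine (hlog.congr_of_eventuallyEq ?_).congr_deriv ?_
  · filter_upwards [isOpen_ne.mem_nhds hx0] with y hy using psiDens_of_ne_zero hy
  · have hr : √(1 - x ^ 2) ≠ 0 := (sqrt_pos.mpr hpos).ne'
    have hsq : √(1 - x ^ 2) ^ 2 = 1 - x ^ 2 := sq_sqrt hpos.le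
    field_simp [hr, hx0]
    linear_combination -hsq

section Superposition

variable {E : Type*} [NormedAddCommGroup E] [NormedSpace ℝ E]

theorem integral_inv_sqrt_one_sub_sq_smul (f : ℝ → E) :
    ∫ x in -1..1, (√(1 - x ^ 2))⁻¹ • f x = ∫ θ in 0..π, f (cos θ) := by
  have himage : cos '' Set.Ioo 0 π = Set.Ioo (-1) 1 := cosPartialHomeomorph.image_source_eq_target
  have hinj : Set.InjOn cos (Set.Ioo 0 π) := injOn_cos.mono Set.Ioo_subset_Icc_self
  rw [intervalIntegral.integral_of_le (by norm_num), intervalIntegral.integral_of_le pi_pos.le,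
    integral_Ioc_eq_integral_Ioo, integral_Ioc_eq_integral_Ioo, ← himage,
    integral_image_eq_integral_abs_deriv_smul measurableSet_Ioo
      (fun θ _ ↦ (hasDerivAt_cos θ).hasDerivWithinAt) hinj]
  refine setIntegral_congr_fun measurableSet_Ioo fun θ hθ ↦ ?_
  have hsin : 0 < sin θ := sin_pos_of_mem_Ioo hθ
  rw [← sin_sq, sqrt_sq hsin.le, abs_neg, abs_of_pos hsin, smul_inv_smul₀ hsin.ne']

variable [CompleteSpace E]

-- Integrate `ψ • L` by parts, where `L x = ∫₀ˣ K = x • ∫₀¹ K (s x) ds`.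
theorem integral_psiDens_smul_eq_integral_cos {K : ℝ → E} (hK : Continuous K) :
    ∫ x in -1..1, psiDens x • K x =
      π⁻¹ • ∫ θ in 0..π, ∫ s in (0 : ℝ)..1, K (s * cos θ) := by
  set M : ℝ → E := fun x ↦ ∫ s in (0 : ℝ)..1, K (s * x)
  have hM : Continuous M :=
    intervalIntegral.continuous_parametric_intervalIntegral_of_continuous' (by fun_prop) 0 1
  have hprim (x : ℝ) : ∫ t in (0 : ℝ)..x, K t = x • M x := by
    simp [M]
  have hL (x : ℝ) : HasDerivAt (fun y ↦ y • M y) (K x) x := by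
    simpa only [hprim] using intervalIntegral.integral_hasDerivAt_right
      (hK.intervalIntegrable 0 x) hK.stronglyMeasurable.stronglyMeasurableAtFilter hK.continuousAt
  have hint₁ : IntervalIntegrable (fun x ↦ psiDens x • K x) volume (-1) 1 :=
    (intervalIntegrable_psiDens _ _).smul_continuousOn hK.continuousOn
  have hint₂ : IntervalIntegrable (fun x ↦ π⁻¹ • (√(1 - x ^ 2))⁻¹ • M x) volume (-1) 1 := by
    have harcsine := Polynomial.Chebyshev.intervalIntegrable_sqrt_one_sub_sq_inv
    simp only [sqrt_inv] at harcsine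
    exact (harcsine.smul_continuousOn hM.continuousOn).smul π⁻¹
  have hderiv : ∀ x ∈ Set.Ioo (-1 : ℝ) 1 \ {0}, HasDerivAt (fun y ↦ (y * psiDens y) • M y)
      (psiDens x • K x - π⁻¹ • (√(1 - x ^ 2))⁻¹ • M x) x := by
    rintro x ⟨hx, hx0⟩
    have hprod := (hasDerivAt_psiDens hx hx0).smul (hL x)
    convert hprod using 1
    · ext y
      simp only [Pi.smul_apply', smul_smul, mul_comm]
    · simp only [smul_smul, inv_mul_cancel_right₀ hx0, neg_mul, neg_smul, sub_eq_add_neg]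
  have hftc := integral_eq_of_hasDerivAt_off_countable_of_le _ _ (by norm_num : (-1 : ℝ) ≤ 1)
    (Set.countable_singleton 0) (continuous_mul_psiDens.smul hM).continuousOn hderiv
    (hint₁.sub hint₂)
  have hψ : psiDens 1 = 0 ∧ psiDens (-1) = 0 := by simp [psiDens]
  rw [intervalIntegral.integral_sub hint₁ hint₂, intervalIntegral.integral_smul,
    integral_inv_sqrt_one_sub_sq_smul M] at hftc
  simpa [hψ, sub_eq_zero] using hftc

theorem integral_psiDens_smul {K : ℝ → E} (hK : Continuous K) :
    ∫ x in -1..1, psiDens x • K x = π⁻¹ • ∫ s in (0 : ℝ)..1, ∫ θ in 0..π, K (s * cos θ) := by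
  rw [integral_psiDens_smul_eq_integral_cos hK, intervalIntegral_intervalIntegral_swap]
  have hcont : Continuous fun p : ℝ × ℝ ↦ K (p.2 * cos p.1) := by fun_prop
  exact (hcont.continuousOn.integrableOn_compact
    (isCompact_uIcc.prod isCompact_uIcc)).mono_set
      (Set.prod_mono Set.uIoc_subset_uIcc Set.uIoc_subset_uIcc)

end Superposition

theorem integral_comp_cos_zero_two_pi {E : Type*} [NormedAddCommGroup E] [NormedSpace ℝ E]
    {f : ℝ → E} (hf : Continuous fun θ ↦ f (cos θ)) :
    ∫ θ in 0..2 * π, f (cos θ) = (2 : ℝ) • ∫ θ in 0..π, f (cos θ) := by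
  have hreflect : ∫ θ in π..2 * π, f (cos θ) = ∫ θ in 0..π, f (cos θ) := by
    have h := intervalIntegral.integral_comp_sub_left (fun θ ↦ f (cos θ)) (2 * π) (a := 0) (b := π)
    simp only [cos_two_pi_sub] at h
    rw [h, sub_zero, two_mul, add_sub_cancel_right]
  rw [← intervalIntegral.integral_add_adjacent_intervals (hf.intervalIntegrable 0 π)
    (hf.intervalIntegrable π (2 * π)), hreflect, two_smul]

theorem one_sub_two_mul_cos_add_sq_ne_zero {q : ℂ} (hq : ‖q‖ < 1) (θ : ℝ) :
    1 - 2 * q * (cos θ : ℝ) + q ^ 2 ≠ 0 := by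
  have hfactor : 1 - 2 * q * (cos θ : ℝ) + q ^ 2 =
      (1 - q * Complex.exp (θ * Complex.I)) * (1 - q * Complex.exp (-θ * Complex.I)) := by
    have hexp : Complex.exp (θ * Complex.I) * Complex.exp (-θ * Complex.I) = 1 := by
      rw [← Complex.exp_add, neg_mul, add_neg_cancel, Complex.exp_zero]
    rw [Complex.ofReal_cos, Complex.cos]
    linear_combination -q ^ 2 * hexp
  have hne (t : ℝ) : 1 - q * Complex.exp (t * Complex.I) ≠ 0 := fun h ↦ by
    have hnorm := congrArg norm (sub_eq_zero.mp h)
    rw [norm_mul, Complex.norm_exp_ofReal_mul_I, norm_one, mul_one] at hnorm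
    exact hq.ne hnorm.symm
  rw [hfactor, ← Complex.ofReal_neg]
  exact mul_ne_zero (hne θ) (hne (-θ))

-- On `w = exp (i θ)` the integrand is `w (w - q)⁻¹ (1 - q w)⁻¹`, so Cauchy's formula applies.
theorem integral_inv_one_sub_two_mul_cos_add_sq {q : ℂ} (hq : ‖q‖ < 1) :
    ∫ θ in 0..π, (1 - 2 * q * (cos θ : ℝ) + q ^ 2)⁻¹ = π / (1 - q ^ 2) := by
  have hdiff : DifferentiableOn ℂ (fun w ↦ (1 - q * w)⁻¹) (Metric.closedBall 0 1) := by
    refine DifferentiableOn.inv (by fun_prop) fun w hw h ↦ ?_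
    have hnorm := congrArg norm (sub_eq_zero.mp h)
    rw [norm_mul, norm_one] at hnorm
    exact (mul_lt_one_of_nonneg_of_lt_one_left (norm_nonneg q) hq
      (mem_closedBall_zero_iff.mp hw)).ne hnorm.symm
  have hcauchy := hdiff.circleIntegral_sub_inv_smul (mem_ball_zero_iff.mpr hq)
  have hintegrand (θ : ℝ) : deriv (circleMap 0 1) θ •
      ((circleMap 0 1 θ - q)⁻¹ • (1 - q * circleMap 0 1 θ)⁻¹) =
        Complex.I * (1 - 2 * q * (cos θ : ℝ) + q ^ 2)⁻¹ := by
    have hw0 : circleMap 0 1 θ ≠ 0 := circleMap_ne_center one_ne_zero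
    have hw : circleMap 0 1 θ ^ 2 + 1 = 2 * (cos θ : ℝ) * circleMap 0 1 θ := by
      simp only [circleMap, zero_add, Complex.ofReal_one, one_mul, Complex.ofReal_cos,
        Complex.two_cos, add_mul, ← Complex.exp_add, neg_mul, neg_add_cancel, Complex.exp_zero, sq]
    have hden : (circleMap 0 1 θ - q) * (1 - q * circleMap 0 1 θ) =
        circleMap 0 1 θ * (1 - 2 * q * (cos θ : ℝ) + q ^ 2) := by
      linear_combination -q * hw
    rw [deriv_circleMap, smul_eq_mul, smul_eq_mul, ← mul_inv, hden, mul_inv]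
    field_simp
  have hcont : Continuous fun θ : ℝ ↦ (1 - 2 * q * (cos θ : ℝ) + q ^ 2)⁻¹ :=
    Continuous.inv₀ (by fun_prop) (one_sub_two_mul_cos_add_sq_ne_zero hq)
  have hcircle : ∮ w in C(0, 1), (w - q)⁻¹ • (1 - q * w)⁻¹ =
      2 * Complex.I * ∫ θ in 0..π, (1 - 2 * q * (cos θ : ℝ) + q ^ 2)⁻¹ := by
    simp only [circleIntegral, hintegrand]
    rw [intervalIntegral.integral_const_mul,
      integral_comp_cos_zero_two_pi (f := fun c : ℝ ↦ (1 - 2 * q * c + q ^ 2)⁻¹) hcont,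
      Complex.real_smul, Complex.ofReal_ofNat]
    ring
  refine mul_left_cancel₀ (mul_ne_zero two_ne_zero Complex.I_ne_zero) ?_
  rw [← hcircle, hcauchy, smul_eq_mul]
  ring

theorem integral_inv_sub_mul_cos {z s d : ℂ} (hd : d ^ 2 = z ^ 2 - s ^ 2)
    (hzd : 0 < (d * starRingEnd ℂ z).re) : ∫ θ in 0..π, (z - s * cos θ)⁻¹ = π / d := by
  have hnorm : ‖z - d‖ < ‖z + d‖ := by
    rw [← sq_lt_sq₀ (norm_nonneg _) (norm_nonneg _), ← Complex.normSq_eq_norm_sq,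
      ← Complex.normSq_eq_norm_sq, Complex.normSq_sub, Complex.normSq_add]
    have hconj : (z * starRingEnd ℂ d).re = (d * starRingEnd ℂ z).re := by
      rw [← Complex.conj_re, map_mul, Complex.conj_conj, mul_comm]
    linarith
  have hsum : z + d ≠ 0 := norm_pos_iff.mp ((norm_nonneg _).trans_lt hnorm)
  obtain ⟨q, rfl⟩ : ∃ q, s = q * (z + d) := ⟨s / (z + d), (div_mul_cancel₀ s hsum).symm⟩
  have hqsq : q ^ 2 * (z + d) = z - d :=
    mul_right_cancel₀ hsum (by linear_combination hd)
  have hq : ‖q‖ < 1 := by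
    rw [← hqsq, norm_mul, norm_pow] at hnorm
    have := lt_of_mul_lt_mul_right (hnorm.trans_eq (one_mul _).symm) (norm_nonneg _)
    exact (sq_lt_one_iff₀ (norm_nonneg _)).mp this
  have hfactor (θ : ℝ) : (z - q * (z + d) * cos θ)⁻¹ =
      2 / (z + d) * (1 - 2 * q * cos θ + q ^ 2)⁻¹ := by
    rw [← inv_div, ← mul_inv]
    congr 1
    linear_combination (-1 / 2 : ℂ) * hqsq
  simp_rw [hfactor]
  rw [intervalIntegral.integral_const_mul, integral_inv_one_sub_two_mul_cos_add_sq hq,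
    div_mul_div_comm]
  have hden : (z + d) * (1 - q ^ 2) = 2 * d := by linear_combination -hqsq
  rw [hden, mul_div_mul_left _ _ two_ne_zero]

theorem re_complexSqrt_pos {w : ℂ} (hw : w ∈ Complex.slitPlane) : 0 < (Complex.sqrt w).re := by
  rw [Complex.sqrt, Complex.cpow_inv_two_re]
  have : -w.re < ‖w‖ := by
    rcases hw with hre | him
    · linarith [norm_nonneg w]
    · exact (neg_le_abs _).trans_lt (Complex.abs_re_lt_norm.mpr him)
  exact sqrt_pos.mpr (by linarith)

theorem complexSqrt_ne_zero {w : ℂ} (hw : w ∈ Complex.slitPlane) : Complex.sqrt w ≠ 0 := fun h ↦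
  (re_complexSqrt_pos hw).ne' (h ▸ Complex.zero_re)

theorem sq_complexSqrt (w : ℂ) : Complex.sqrt w ^ 2 = w := Complex.cpow_ofNat_inv_pow w 2

theorem complexSqrt_sq {w : ℂ} (hw : 0 < w.re) : Complex.sqrt (w ^ 2) = w :=
  Complex.sq_cpow_two_inv hw

theorem hasDerivAt_complexSqrt {w : ℂ} (hw : w ∈ Complex.slitPlane) :
    HasDerivAt Complex.sqrt (1 / (2 * Complex.sqrt w)) w := by
  refine (Complex.hasDerivAt_sqrt hw).congr_deriv ?_
  rw [neg_div, Complex.cpow_neg, ← one_div, div_div, mul_comm, one_div (2 : ℂ), Complex.sqrt]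

section OffRealAxis

variable {z : ℂ} (hz : z.im ≠ 0)
include hz

theorem sq_sub_sq_mem_slitPlane (s : ℝ) : (s : ℂ) ^ 2 - z ^ 2 ∈ Complex.slitPlane := by
  have hre : ((s : ℂ) ^ 2 - z ^ 2).re = s ^ 2 - z.re ^ 2 + z.im ^ 2 := by
    simp only [pow_two, Complex.sub_re, Complex.mul_re, Complex.ofReal_re, Complex.ofReal_im]
    ring
  have him : ((s : ℂ) ^ 2 - z ^ 2).im = -(2 * z.re * z.im) := by
    simp only [pow_two, Complex.sub_im, Complex.mul_im, Complex.ofReal_re, Complex.ofReal_im]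
    ring
  rw [Complex.mem_slitPlane_iff, hre, him]
  rcases eq_or_ne z.re 0 with hre | hre
  · left
    rw [hre]
    nlinarith [sq_nonneg s, sq_pos_of_ne_zero hz]
  · exact Or.inr (neg_ne_zero.mpr (mul_ne_zero (mul_ne_zero two_ne_zero hre) hz))

theorem sign_im_sq : (z.im.sign : ℂ) ^ 2 = 1 := by
  rcases Real.sign_apply_eq_of_ne_zero _ hz with h | h <;> simp [h]

theorem complexSqrt_neg_sq : Complex.sqrt (-z ^ 2) = -(z.im.sign * Complex.I * z) := by
  have hre : 0 < (-(z.im.sign * Complex.I * z)).re := by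
    simpa using Real.sign_mul_pos_of_ne_zero _ hz
  rw [← complexSqrt_sq hre]
  congr 1
  linear_combination (-z ^ 2 * z.im.sign ^ 2) * Complex.I_sq + z ^ 2 * sign_im_sq hz

theorem log_neg_sign_mul_I :
    Complex.log (-(z.im.sign * Complex.I)) = -(z.im.sign * (π / 2) * Complex.I) := by
  rcases Real.sign_apply_eq_of_ne_zero _ hz with h | h <;>
    simp [h, Complex.log_I, Complex.log_neg_I]

theorem re_sign_mul_I_mul_sqrt_mul_conj_pos (s : ℝ) :
    0 < (z.im.sign * Complex.I * Complex.sqrt (s ^ 2 - z ^ 2) * starRingEnd ℂ z).re := by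
  have hc := re_complexSqrt_pos (sq_sub_sq_mem_slitPlane hz s)
  have hsq := congrArg Complex.im (sq_complexSqrt (s ^ 2 - z ^ 2))
  set c := Complex.sqrt (s ^ 2 - z ^ 2)
  have hprod : c.re * c.im = -(z.re * z.im) := by
    simp only [pow_two, Complex.mul_im, Complex.sub_im, Complex.ofReal_re, Complex.ofReal_im] at hsq
    linarith
  have hmul : c.re * (z.im.sign * Complex.I * c * starRingEnd ℂ z).re =
      (c.re ^ 2 + z.re ^ 2) * (z.im.sign * z.im) := by
    simp only [Complex.mul_re, Complex.mul_im, Complex.conj_re, Complex.conj_im, Complex.I_re,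
      Complex.I_im, Complex.ofReal_re, Complex.ofReal_im]
    linear_combination (-z.im.sign * z.re) * hprod
  have hpos : 0 < (c.re ^ 2 + z.re ^ 2) * (z.im.sign * z.im) :=
    mul_pos (by positivity) (Real.sign_mul_pos_of_ne_zero _ hz)
  exact pos_of_mul_pos_right (hmul ▸ hpos) hc.le

-- If `u = (s + √(s² - z²)) / z` then `z (u² + 1) = 2 s u`, so a real `u` would make `z` real.
theorem add_sqrt_div_mem_slitPlane (s : ℝ) :
    (s + Complex.sqrt (s ^ 2 - z ^ 2)) / z ∈ Complex.slitPlane := by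
  have hz0 : z ≠ 0 := by
    rintro rfl
    exact hz rfl
  have hsq := sq_complexSqrt (s ^ 2 - z ^ 2)
  set u := (s + Complex.sqrt (s ^ 2 - z ^ 2)) / z with hu
  have hquad : z * (u ^ 2 + 1) = 2 * s * u := by
    rw [hu]
    field_simp
    linear_combination hsq
  refine Or.inr fun him ↦ hz ?_
  have hreal : u = u.re := Complex.ext rfl (by simp [him])
  rw [hreal] at hquad
  have hquad_im : z.im * (u.re ^ 2 + 1) = 0 := by
    have := congrArg Complex.im hquad
    norm_cast at this
    simpa [pow_two] using this
  exact (mul_eq_zero.mp hquad_im).resolve_right (by positivity)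

theorem hasDerivAt_log_add_sqrt_div (s : ℝ) :
    HasDerivAt (fun t : ℝ ↦ Complex.log ((t + Complex.sqrt (t ^ 2 - z ^ 2)) / z))
      (Complex.sqrt (s ^ 2 - z ^ 2))⁻¹ s := by
  have hslit := sq_sub_sq_mem_slitPlane hz s
  have hlogslit := add_sqrt_div_mem_slitPlane hz s
  have hsqrt : HasDerivAt (fun w : ℂ ↦ Complex.sqrt (w ^ 2 - z ^ 2))
      (s / Complex.sqrt (s ^ 2 - z ^ 2)) s := by
    refine ((hasDerivAt_complexSqrt hslit).comp (s : ℂ)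
      ((hasDerivAt_pow 2 (s : ℂ)).sub_const (z ^ 2))).congr_deriv ?_
    field_simp
    norm_num
  refine ((((hasDerivAt_id (s : ℂ)).add hsqrt).div_const z).clog
    hlogslit).comp_ofReal.congr_deriv ?_
  have hc0 := complexSqrt_ne_zero hslit
  obtain ⟨hnum, hz0⟩ := div_ne_zero_iff.mp (Complex.slitPlane_ne_zero hlogslit)
  simp only [Pi.add_apply, id_eq]
  field_simp
  ring

theorem integral_inv_sqrt_sq_sub_sq (t : ℝ) :
    ∫ s in (0 : ℝ)..t, (Complex.sqrt (s ^ 2 - z ^ 2))⁻¹ =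
      Complex.log ((t + Complex.sqrt (t ^ 2 - z ^ 2)) / z) + z.im.sign * (π / 2) * Complex.I := by
  have hcont : Continuous fun s : ℝ ↦ (Complex.sqrt (s ^ 2 - z ^ 2))⁻¹ := by
    refine continuous_iff_continuousAt.mpr fun s ↦ ContinuousAt.inv₀ ?_ ?_
    · exact ContinuousAt.comp (f := fun s : ℝ ↦ (s : ℂ) ^ 2 - z ^ 2)
        (Complex.differentiableAt_sqrt (sq_sub_sq_mem_slitPlane hz s)).continuousAt (by fun_prop)
    · exact complexSqrt_ne_zero (sq_sub_sq_mem_slitPlane hz s)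
  have hz0 : z ≠ 0 := by
    rintro rfl
    exact hz rfl
  have hstart : ((0 : ℝ) + Complex.sqrt ((0 : ℝ) ^ 2 - z ^ 2)) / z = -(z.im.sign * Complex.I) := by
    rw [Complex.ofReal_zero, zero_pow two_ne_zero, zero_sub, zero_add, complexSqrt_neg_sq hz,
      neg_div, mul_div_cancel_right₀ _ hz0]
  rw [intervalIntegral.integral_eq_sub_of_hasDerivAt
    (fun s _ ↦ hasDerivAt_log_add_sqrt_div hz s) (hcont.intervalIntegrable 0 t), hstart,
    log_neg_sign_mul_I hz]
  ring

theorem integral_inv_sub_ofReal_mul_cos (s : ℝ) :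
    ∫ θ in 0..π, (z - (s * cos θ : ℝ))⁻¹ =
      -(π * z.im.sign * Complex.I) * (Complex.sqrt (s ^ 2 - z ^ 2))⁻¹ := by
  have hd : (z.im.sign * Complex.I * Complex.sqrt (s ^ 2 - z ^ 2)) ^ 2 = z ^ 2 - s ^ 2 := by
    simp [mul_pow, sign_im_sq hz, sq_complexSqrt]
  simp only [Complex.ofReal_mul]
  rw [integral_inv_sub_mul_cos hd (re_sign_mul_I_mul_sqrt_mul_conj_pos hz s)]
  have hσ : (z.im.sign : ℂ)⁻¹ = z.im.sign := by
    rw [← Complex.ofReal_inv, Real.inv_sign]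
  rw [div_eq_mul_inv, mul_inv, mul_inv, Complex.inv_I, hσ]
  ring

theorem integral_psiDens_div_sub :
    ∫ x in -1..1, (psiDens x : ℂ) / (z - x) =
      π / 2 - z.im.sign * Complex.I * Complex.log ((1 + (1 - z ^ 2) ^ ((1 : ℂ) / 2)) / z) := by
  have hcont : Continuous fun x : ℝ ↦ (z - x)⁻¹ :=
    Continuous.inv₀ (by fun_prop) fun x h ↦ hz (by simpa using congrArg Complex.im h)
  calc
    ∫ x in -1..1, (psiDens x : ℂ) / (z - x) = ∫ x in -1..1, psiDens x • (z - x)⁻¹ := by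
      simp [div_eq_mul_inv]
    _ = π⁻¹ • ∫ s in (0 : ℝ)..1, ∫ θ in 0..π, (z - (s * cos θ : ℝ))⁻¹ :=
      integral_psiDens_smul hcont
    _ = -(z.im.sign * Complex.I) * ∫ s in (0 : ℝ)..1, (Complex.sqrt (s ^ 2 - z ^ 2))⁻¹ := by
      simp only [integral_inv_sub_ofReal_mul_cos hz, intervalIntegral.integral_const_mul,
        Complex.real_smul, Complex.ofReal_inv]
      field_simp
    _ = _ := by
      rw [integral_inv_sqrt_sq_sub_sq hz 1, Complex.ofReal_one, one_pow, Complex.sqrt, one_div]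
      linear_combination (-(π / 2) * z.im.sign ^ 2 : ℂ) * Complex.I_sq +
        (π / 2 : ℂ) * sign_im_sq hz

end OffRealAxis

theorem hasDerivAt_integral_log_sub_mul {μ : Measure ℝ} {f : ℝ → ℂ} {a b : ℝ}
    (hf : IntervalIntegrable f μ a b) {z : ℂ} (hz : z.im ≠ 0) :
    HasDerivAt (fun w : ℂ ↦ ∫ x in a..b, Complex.log (w - x) * f x ∂μ)
      (∫ x in a..b, f x / (z - x) ∂μ) z := by
  set r : ℝ := |z.im| / 2 with hr
  have hr0 : 0 < r := half_pos (abs_pos.mpr hz)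
  have him : ∀ w ∈ Metric.ball z r, r ≤ |w.im| := fun w hw ↦ by
    have hdist : |z.im - w.im| < r :=
      (Complex.abs_im_le_norm (z - w)).trans_lt (mem_ball_iff_norm'.mp hw)
    linarith [abs_sub_abs_le_abs_sub z.im w.im]
  have hslit {w : ℂ} (hw : w ∈ Metric.ball z r) (x : ℝ) : w - x ∈ Complex.slitPlane :=
    Or.inr (by simpa using abs_pos.mp (hr0.trans_le (him w hw)))
  have hlog {w : ℂ} (hw : w ∈ Metric.ball z r) : Continuous fun x : ℝ ↦ Complex.log (w - x) :=
    Continuous.clog (by fun_prop) (hslit hw)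
  have hinv : Continuous fun x : ℝ ↦ (z - x)⁻¹ :=
    Continuous.inv₀ (by fun_prop)
      fun x ↦ Complex.slitPlane_ne_zero (hslit (Metric.mem_ball_self hr0) x)
  refine (intervalIntegral.hasDerivAt_integral_of_dominated_loc_of_deriv_le
    (bound := fun x ↦ ‖f x‖ / r) (F' := fun w x ↦ f x / (w - x))
    (Metric.ball_mem_nhds z hr0) ?_ ?_ ?_ ?_ ?_ ?_).2
  · filter_upwards [Metric.ball_mem_nhds z hr0] with w hw
    exact (hlog hw).aestronglyMeasurable.mul hf.def'.aestronglyMeasurable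
  · exact hf.continuousOn_mul (hlog (Metric.mem_ball_self hr0)).continuousOn
  · simp only [div_eq_mul_inv]
    exact hf.def'.aestronglyMeasurable.mul hinv.aestronglyMeasurable
  · refine ae_of_all _ fun x _ w hw ↦ ?_
    have hbound : r ≤ ‖w - x‖ :=
      (him w hw).trans (by simpa using Complex.abs_im_le_norm (w - x))
    rw [norm_div]
    gcongr
  · exact hf.norm.div_const r
  · refine ae_of_all _ fun x _ w hw ↦ ?_
    have hderiv := (((hasDerivAt_id w).sub_const (x : ℂ)).clog (hslit hw x)).mul_const (f x)
    exact hderiv.congr_deriv (one_div_mul_eq_div _ _)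

theorem hasDerivAt_gFun {z : ℂ} (hz : z.im ≠ 0) :
    HasDerivAt gFun (π / 2 - z.im.sign * Complex.I * π * psiC z) z := by
  have hψ : IntervalIntegrable (fun x ↦ (psiDens x : ℂ)) volume (-1) 1 :=
    (intervalIntegrable_psiDens (-1) 1).imp Integrable.ofReal Integrable.ofReal
  refine (hasDerivAt_integral_log_sub_mul hψ hz).congr_deriv ?_
  rw [integral_psiDens_div_sub hz, psiC]
  field_simp

theorem cauchy_transform_psi_general (z : ℂ) (him : z.im ≠ 0) :
    (∫ x in (-1 : ℝ)..1, ((psiDens x : ℝ) : ℂ) / (z - x)) =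
        (π / 2 : ℂ) - (Real.sign z.im : ℂ) * Complex.I *
          Complex.log ((1 + (1 - z ^ 2) ^ ((1 : ℂ) / 2)) / z) ∧
      (0 < z.im → HasDerivAt gFun ((π / 2 : ℂ) - Complex.I * π * psiC z) z) ∧
      (z.im < 0 → HasDerivAt gFun ((π / 2 : ℂ) + Complex.I * π * psiC z) z) := by
  refine ⟨integral_psiDens_div_sub him, fun hpos ↦ ?_, fun hneg ↦ ?_⟩
  · simpa [Real.sign_of_pos hpos] using hasDerivAt_gFun him
  · simpa [Real.sign_of_neg hneg] using hasDerivAt_gFun him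

/-- **Lemma (Cauchy transform of `ψ` and derivative of `g`).**
For `Re z > 0`, `Im z ≠ 0`:
`∫_{-1}^1 ψ(x)/(z-x) dx = π/2 - sgn(Im z) i Log((1+(1-z²)^{1/2})/z)`; equivalently,
`g'(z) = π/2 - iπψ(z)` for `Im z > 0` and `g'(z) = π/2 + iπψ(z)` for `Im z < 0`. -/
theorem cauchy_transform_psi (z : ℂ) (hre : 0 < z.re) (him : z.im ≠ 0) :
    (∫ x in (-1 : ℝ)..1, ((psiDens x : ℝ) : ℂ) / (z - x)) =
        (π / 2 : ℂ) - (Real.sign z.im : ℂ) * Complex.I *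
          Complex.log ((1 + (1 - z ^ 2) ^ ((1 : ℂ) / 2)) / z) ∧
      (0 < z.im → HasDerivAt gFun ((π / 2 : ℂ) - Complex.I * π * psiC z) z) ∧
      (z.im < 0 → HasDerivAt gFun ((π / 2 : ℂ) + Complex.I * π * psiC z) z) :=
  cauchy_transform_psi_general z him
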